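/- Let δ > 0, let Q : ℝ → Matrix (Fin N) (Fin N) ℝ be continuous with Q t a generator matrix for every t ≥ 0, and suppose there are constants C ≥ 1 and γ > 0 such that every solution ξ : ℝ → (Fin N → ℝ) of the homogeneous equation HasDerivAt ξ (δ⁻¹ • ((Q t)ᵀ *ᵥ ξ t)) t with zero-sum value at some time s ≥ 0 satisfies ‖ξ t‖₁ ≤ C * exp(−γ (t − s)/δ) * ‖ξ s‖₁ for all t ≥ s. Let g : ℝ → (Fin N → ℝ) be continuous with ‖g t‖₁ ≤ M for all t ≥ 0, and let η : ℝ → (Fin N → ℝ) satisfy ∑ i, η i t = 0 for all t and HasDerivAt η (δ⁻¹ • ((Q t)ᵀ *ᵥ η t) − g t) t for all t ≥ 0. Then for every t ≥ 0, ‖η t‖₁ ≤ C * exp(−γ t/δ) * ‖η 0‖₁ + C * M * δ / γ. -/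

import Mathlib

open Matrix

/-- The ℓ¹ norm on `Fin N → ℝ`. -/
def l1norm {N : ℕ} (x : Fin N → ℝ) : ℝ := ∑ i, |x i|

/-- A generator (transition-rate) matrix: nonnegative off-diagonal entries and zero row sums. -/
def IsGenerator {N : ℕ} (Q : Matrix (Fin N) (Fin N) ℝ) : Prop :=
  (∀ i j, i ≠ j → 0 ≤ Q i j) ∧ (∀ i, ∑ j, Q i j = 0)

/-!
With `A t = δ⁻¹ (Q t)ᵀ`, the equation `ξ' = A ξ` has a propagator `U(t, s)`, built from Peano–Baker
series, so `t ↦ U(t, s) x` is the solution with value `x` at time `s` and the stability hypothesis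
bounds `U(t, s)` on zero-sum vectors. Since `d/ds (U(t, s) η(s)) = -U(t, s) g(s)`, the norm of `η t`
is at most that of `U(t, 0) η(0)` plus the integral over `[0, t]` of a bound for `U(t, s) g(s)`. The
vectors `g s` have zero sum because both `η'` and the range of `(Q s)ᵀ` do, so the integrand can be
taken to be `C M exp (-γ (t - s) / δ)`.
-/

open Filter Topology
open scoped NNReal

section PeanoBaker

theorem exists_nnnorm_le_of_abs_le {F : Type*} [SeminormedAddCommGroup F] {f : ℝ → F}
    (hf : Continuous f) (R : ℝ) : ∃ K : ℝ≥0, ∀ s, |s| ≤ R → ‖f s‖₊ ≤ K := by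
  obtain ⟨K, hK⟩ := (isCompact_Icc (a := -R) (b := R)).exists_bound_of_continuousOn hf.continuousOn
  exact ⟨K.toNNReal, fun s hs => NNReal.le_toNNReal_of_coe_le (hK s (abs_le.1 hs))⟩

variable {E : Type*} [NormedAddCommGroup E] [NormedSpace ℝ E] {A : ℝ → E →L[ℝ] E}

/-- The terms of the Peano–Baker series of `ξ' = A ξ`, `ξ 0 = x₀`: iterated integrals of `A`
applied to `x₀`, with base time `0`. -/
noncomputable def peanoBaker (A : ℝ → E →L[ℝ] E) (x₀ : E) : ℕ → ℝ → E
  | 0 => fun _ => x₀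
  | n + 1 => fun t => ∫ s in (0 : ℝ)..t, A s (peanoBaker A x₀ n s)

/-- The sum of the Peano–Baker series, which solves `ξ' = A ξ`, `ξ 0 = x₀` when `A` is
continuous. -/
noncomputable def peanoBakerSum (A : ℝ → E →L[ℝ] E) (x₀ : E) (t : ℝ) : E :=
  ∑' n, peanoBaker A x₀ n t

theorem continuous_peanoBaker (hA : Continuous A) (x₀ : E) (n : ℕ) :
    Continuous (peanoBaker A x₀ n) := by
  induction n with
  | zero => exact continuous_const
  | succ n ih =>
    exact intervalIntegral.continuous_primitive
      (fun a b => (hA.clm_apply ih).intervalIntegrable a b) 0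

theorem hasDerivAt_peanoBaker_succ [CompleteSpace E] (hA : Continuous A) (x₀ : E) (n : ℕ) (t : ℝ) :
    HasDerivAt (peanoBaker A x₀ (n + 1)) (A t (peanoBaker A x₀ n t)) t :=
  ((hA.clm_apply (continuous_peanoBaker hA x₀ n)).integral_hasStrictDerivAt 0 t).hasDerivAt

theorem norm_peanoBaker_le (hA : Continuous A) (x₀ : E) {K : ℝ≥0} {R : ℝ}
    (hK : ∀ s, |s| ≤ R → ‖A s‖₊ ≤ K) (n : ℕ) {t : ℝ} (ht : |t| ≤ R) :
    ‖peanoBaker A x₀ n t‖ ≤ ‖x₀‖ * ((K * |t|) ^ n / n.factorial) := by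
  induction n generalizing t with
  | zero => simp [peanoBaker]
  | succ n ih =>
    have hcont := hA.clm_apply (continuous_peanoBaker hA x₀ n)
    have hbound : ∀ s ∈ Set.uIoc 0 t, ‖A s (peanoBaker A x₀ n s)‖ ≤
        ‖x₀‖ * K ^ (n + 1) / n.factorial * |s - 0| ^ n := by
      intro s hs
      have hst : |s| ≤ |t| := by
        simpa using Set.abs_sub_left_of_mem_uIcc (Set.uIoc_subset_uIcc hs)
      calc ‖A s (peanoBaker A x₀ n s)‖
          ≤ K * (‖x₀‖ * ((K * |s|) ^ n / n.factorial)) :=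
            (A s).le_of_opNorm_le_of_le (hK s (hst.trans ht)) (ih (hst.trans ht))
        _ = ‖x₀‖ * K ^ (n + 1) / n.factorial * |s - 0| ^ n := by rw [sub_zero]; ring
    calc ‖peanoBaker A x₀ (n + 1) t‖
        ≤ ∫ s in Set.uIoc 0 t, ‖A s (peanoBaker A x₀ n s)‖ :=
          intervalIntegral.norm_integral_le_integral_norm_uIoc
      _ ≤ ∫ s in Set.uIoc 0 t, ‖x₀‖ * K ^ (n + 1) / n.factorial * |s - 0| ^ n :=
          MeasureTheory.setIntegral_mono_on (hcont.norm.intervalIntegrable 0 t).def'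
            (Continuous.intervalIntegrable (by fun_prop) 0 t).def' measurableSet_uIoc hbound
      _ = ‖x₀‖ * ((K * |t|) ^ (n + 1) / (n + 1).factorial) := by
          rw [MeasureTheory.integral_const_mul, integral_pow_abs_sub_uIoc, sub_zero,
            Nat.factorial_succ, mul_pow]
          push_cast
          field_simp

theorem exists_summable_norm_peanoBaker_le (hA : Continuous A) (x₀ : E) (R : ℝ) :
    ∃ u : ℕ → ℝ, Summable u ∧ ∀ n s, |s| ≤ R → ‖peanoBaker A x₀ n s‖ ≤ u n := by
  obtain ⟨K, hK⟩ := exists_nnnorm_le_of_abs_le hA R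
  refine ⟨fun n => ‖x₀‖ * ((K * R) ^ n / n.factorial),
    (Real.summable_pow_div_factorial _).mul_left _, fun n s hs => ?_⟩
  exact (norm_peanoBaker_le hA x₀ hK n hs).trans (by dsimp only; gcongr)

theorem peanoBakerSum_zero (A : ℝ → E →L[ℝ] E) (x₀ : E) : peanoBakerSum A x₀ 0 = x₀ := by
  refine tsum_eq_single 0 fun n hn => ?_
  obtain ⟨m, rfl⟩ := Nat.exists_eq_succ_of_ne_zero hn
  exact intervalIntegral.integral_same

theorem hasDerivAt_peanoBakerSum [CompleteSpace E] (hA : Continuous A) (x₀ : E) (t : ℝ) :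
    HasDerivAt (peanoBakerSum A x₀) (A t (peanoBakerSum A x₀ t)) t := by
  set R := |t| + 1
  obtain ⟨K, hK⟩ := exists_nnnorm_le_of_abs_le hA R
  obtain ⟨u, hu, hle⟩ := exists_summable_norm_peanoBaker_le hA x₀ R
  have hsum : ∀ s ∈ Set.Ioo (-R) R, Summable fun n => peanoBaker A x₀ n s := fun s hs =>
    .of_norm_bounded hu fun n => hle n s (abs_lt.2 hs).le
  have htR : t ∈ Set.Ioo (-R) R := abs_lt.1 (lt_add_one _)
  have htail : HasDerivAt (fun s => ∑' n, peanoBaker A x₀ (n + 1) s)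
      (∑' n, A t (peanoBaker A x₀ n t)) t :=
    hasDerivAt_tsum_of_isPreconnected (hu.mul_left (K : ℝ)) isOpen_Ioo isPreconnected_Ioo
      (fun n s _ => hasDerivAt_peanoBaker_succ hA x₀ n s)
      (fun n s hs => (A s).le_of_opNorm_le_of_le (hK s (abs_lt.2 hs).le)
        (hle n s (abs_lt.2 hs).le))
      htR ((summable_nat_add_iff 1).2 (hsum t htR)) htR
  rw [← (A t).map_tsum (hsum t htR)] at htail
  refine (htail.const_add x₀).congr_of_eventuallyEq ?_
  filter_upwards [isOpen_Ioo.mem_nhds htR] with s hs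
  exact (hsum s hs).tsum_eq_zero_add

theorem eq_of_hasDerivAt_linear (hA : Continuous A) {ξ ζ : ℝ → E}
    (hξ : ∀ t, HasDerivAt ξ (A t (ξ t)) t) (hζ : ∀ t, HasDerivAt ζ (A t (ζ t)) t)
    {t₀ : ℝ} (h₀ : ξ t₀ = ζ t₀) : ξ = ζ := by
  ext t
  set R := max |t| |t₀| + 1
  obtain ⟨K, hK⟩ := exists_nnnorm_le_of_abs_le hA R
  exact ODE_solution_unique_of_mem_Ioo (v := fun s => A s) (s := fun _ => Set.univ)
    (fun s hs => ((A s).lipschitz.weaken (hK s (abs_lt.2 hs).le)).lipschitzOnWith)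
    (abs_lt.1 ((le_max_right _ _).trans_lt (lt_add_one _)))
    (fun s _ => ⟨hξ s, trivial⟩) (fun s _ => ⟨hζ s, trivial⟩) h₀
    (abs_lt.1 ((le_max_left _ _).trans_lt (lt_add_one _)))

end PeanoBaker

section Propagator

variable {𝔸 : Type*} [NormedRing 𝔸] [NormedAlgebra ℝ 𝔸] {a : ℝ → 𝔸}

/-- The solution of `Φ' = a Φ`, `Φ 0 = 1` in a Banach algebra. -/
noncomputable def fundamentalSolution (a : ℝ → 𝔸) : ℝ → 𝔸 :=
  peanoBakerSum (fun t => ContinuousLinearMap.mul ℝ 𝔸 (a t)) 1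

/-- The solution of `Ψ' = -Ψ a`, `Ψ 0 = 1` in a Banach algebra, which is the pointwise inverse of
the fundamental solution of `a`. -/
noncomputable def invFundamentalSolution (a : ℝ → 𝔸) : ℝ → 𝔸 :=
  peanoBakerSum (fun t => -(ContinuousLinearMap.mul ℝ 𝔸).flip (a t)) 1

/-- The propagator `U(t, s)` of `Φ' = a Φ`, which carries the value of a solution at time `s` to its
value at time `t`. -/
noncomputable def propagator (a : ℝ → 𝔸) (t s : ℝ) : 𝔸 :=
  fundamentalSolution a t * invFundamentalSolution a s

variable [CompleteSpace 𝔸]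

theorem hasDerivAt_fundamentalSolution (ha : Continuous a) (t : ℝ) :
    HasDerivAt (fundamentalSolution a) (a t * fundamentalSolution a t) t :=
  hasDerivAt_peanoBakerSum (A := fun t => ContinuousLinearMap.mul ℝ 𝔸 (a t)) (by fun_prop) 1 t

theorem hasDerivAt_invFundamentalSolution (ha : Continuous a) (t : ℝ) :
    HasDerivAt (invFundamentalSolution a) (-(invFundamentalSolution a t * a t)) t :=
  hasDerivAt_peanoBakerSum (A := fun t => -(ContinuousLinearMap.mul ℝ 𝔸).flip (a t))
    (by fun_prop) 1 t

theorem fundamentalSolution_mul_inv (ha : Continuous a) (t : ℝ) :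
    fundamentalSolution a t * invFundamentalSolution a t = 1 := by
  -- Both `Φ Ψ` and the constant `1` solve `X' = a X - X a`, `X 0 = 1`.
  let commutator : ℝ → 𝔸 →L[ℝ] 𝔸 := fun t =>
    ContinuousLinearMap.mul ℝ 𝔸 (a t) - (ContinuousLinearMap.mul ℝ 𝔸).flip (a t)
  have hprod : ∀ t, HasDerivAt (fun r => fundamentalSolution a r * invFundamentalSolution a r)
      (commutator t (fundamentalSolution a t * invFundamentalSolution a t)) t := fun t => by
    refine ((hasDerivAt_fundamentalSolution ha t).mul
      (hasDerivAt_invFundamentalSolution ha t)).congr_deriv ?_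
    simp [commutator, mul_assoc, sub_eq_add_neg]
  have hone : ∀ t, HasDerivAt (fun _ : ℝ => (1 : 𝔸)) (commutator t 1) t := fun t => by
    simpa [commutator] using hasDerivAt_const t (1 : 𝔸)
  refine congrFun (eq_of_hasDerivAt_linear (t₀ := 0) (by fun_prop) hprod hone ?_) t
  simp only [fundamentalSolution, invFundamentalSolution, peanoBakerSum_zero, mul_one]

theorem propagator_self (ha : Continuous a) (t : ℝ) : propagator a t t = 1 :=
  fundamentalSolution_mul_inv ha t

theorem hasDerivAt_propagator_left (ha : Continuous a) (t s : ℝ) :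
    HasDerivAt (fun r => propagator a r s) (a t * propagator a t s) t := by
  simpa only [propagator, mul_assoc] using (hasDerivAt_fundamentalSolution ha t).mul_const _

theorem hasDerivAt_propagator_right (ha : Continuous a) (t s : ℝ) :
    HasDerivAt (fun r => propagator a t r) (-(propagator a t s * a s)) s := by
  simpa only [propagator, mul_assoc, mul_neg] using
    (hasDerivAt_invFundamentalSolution ha s).const_mul (fundamentalSolution a t)

end Propagator

section VariationOfConstants

variable {E : Type*} [NormedAddCommGroup E] [NormedSpace ℝ E]

theorem image_seminorm_le_of_seminorm_deriv_right_le_deriv_boundary {p : Seminorm ℝ E}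
    (hp : Continuous p) {f f' : ℝ → E} {a b : ℝ} (hf : ContinuousOn f (Set.Icc a b))
    (hf' : ∀ x ∈ Set.Ico a b, HasDerivWithinAt f (f' x) (Set.Ici x) x) {B B' : ℝ → ℝ}
    (ha : p (f a) ≤ B a) (hB : ∀ x, HasDerivAt B (B' x) x)
    (bound : ∀ x ∈ Set.Ico a b, p (f' x) ≤ B' x) : ∀ ⦃x⦄, x ∈ Set.Icc a b → p (f x) ≤ B x := by
  refine image_le_of_liminf_slope_right_le_deriv_boundary (hp.comp_continuousOn hf) ha
    (fun x _ => (hB x).continuousAt.continuousWithinAt) (fun x _ => (hB x).hasDerivWithinAt)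
    fun x hx r hr => Eventually.frequently ?_
  have hslope : Tendsto (fun z => p (slope f x z)) (𝓝[>] x) (𝓝 (p (f' x))) :=
    (hp.tendsto _).comp
      ((hasDerivWithinAt_iff_tendsto_slope' Set.self_notMem_Ioi).1 (hf' x hx).Ioi_of_Ici)
  filter_upwards [hslope.eventually_lt_const ((bound x hx).trans_lt hr), self_mem_nhdsWithin]
    with z hzr hxz
  have hinv : 0 ≤ (z - x)⁻¹ := inv_nonneg.2 (sub_pos.2 hxz).le
  calc slope (p ∘ f) x z = (z - x)⁻¹ * (p (f z) - p (f x)) := rfl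
    _ ≤ (z - x)⁻¹ * p (f z - f x) := by
      gcongr
      exact sub_le_iff_le_add'.2 (le_map_add_map_sub p _ _)
    _ = p (slope f x z) := by
      rw [slope_def_module, map_smul_eq_mul, Real.norm_of_nonneg hinv]
    _ < r := hzr

variable [CompleteSpace E] {A : ℝ → E →L[ℝ] E}

theorem hasDerivAt_propagator_left_apply (hA : Continuous A) (t s : ℝ) (x : E) :
    HasDerivAt (fun r => propagator A r s x) (A t (propagator A t s x)) t := by
  simpa using (hasDerivAt_propagator_left hA t s).clm_apply (hasDerivAt_const t x)

theorem hasDerivAt_propagator_right_apply (hA : Continuous A) (t : ℝ) {s : ℝ} {η : ℝ → E} {y : E}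
    (hη : HasDerivAt η (A s (η s) + y) s) :
    HasDerivAt (fun r => propagator A t r (η r)) (propagator A t s y) s := by
  refine ((hasDerivAt_propagator_right hA t s).clm_apply hη).congr_deriv ?_
  simp

theorem seminorm_le_add_integral_of_propagator_le (hA : Continuous A) {p : Seminorm ℝ E}
    (hp : Continuous p) {η f : ℝ → E} {t₀ t : ℝ} (ht : t₀ ≤ t)
    (hη : ∀ s ∈ Set.Icc t₀ t, HasDerivAt η (A s (η s) + f s) s) {b : ℝ → ℝ} (hb : Continuous b)
    (hbound : ∀ s ∈ Set.Icc t₀ t, p (propagator A t s (f s)) ≤ b s) :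
    p (η t) ≤ p (propagator A t t₀ (η t₀)) + ∫ s in t₀..t, b s := by
  have hderiv : ∀ s ∈ Set.Icc t₀ t,
      HasDerivAt (fun r => propagator A t r (η r)) (propagator A t s (f s)) s :=
    fun s hs => hasDerivAt_propagator_right_apply hA t (hη s hs)
  have hfence := image_seminorm_le_of_seminorm_deriv_right_le_deriv_boundary hp
    (B := fun s => p (propagator A t t₀ (η t₀)) + ∫ r in t₀..s, b r)
    (fun s hs => (hderiv s hs).continuousAt.continuousWithinAt)
    (fun s hs => (hderiv s (Set.Ico_subset_Icc_self hs)).hasDerivWithinAt)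
    (by simp) (fun s => (hb.integral_hasStrictDerivAt t₀ s).hasDerivAt.const_add _)
    (fun s hs => hbound s (Set.Ico_subset_Icc_self hs)) (Set.right_mem_Icc.2 ht)
  simpa [propagator_self hA] using hfence

theorem integral_exp_neg_mul_sub_div_le {δ γ : ℝ} (hδ : 0 < δ) (hγ : 0 < γ) (t₀ t : ℝ) :
    ∫ s in t₀..t, Real.exp (-γ * (t - s) / δ) ≤ δ / γ := by
  have hprim : ∀ s, HasDerivAt (fun s => δ / γ * Real.exp (-γ * (t - s) / δ))
      (Real.exp (-γ * (t - s) / δ)) s := fun s => by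
    refine (((((hasDerivAt_id s).const_sub t).const_mul (-γ)).div_const δ).exp.const_mul
      (δ / γ)).congr_deriv ?_
    simp only [id_eq]
    field_simp
  rw [intervalIntegral.integral_eq_sub_of_hasDerivAt (fun s _ => hprim s)
    (Continuous.intervalIntegrable (by fun_prop) _ _)]
  have : 0 ≤ δ / γ * Real.exp (-γ * (t - t₀) / δ) := by positivity
  simpa

theorem initial_layer_bound_general {p : Seminorm ℝ E} (hp : Continuous p) (S : Set E)
    {δ γ C M : ℝ} (hδ : 0 < δ) (hγ : 0 < γ) (hC : 0 ≤ C) (hA : Continuous A)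
    (hstab : ∀ ξ : ℝ → E, (∀ t, 0 ≤ t → HasDerivAt ξ (δ⁻¹ • A t (ξ t)) t) →
      ∀ s, 0 ≤ s → ξ s ∈ S → ∀ t, s ≤ t →
        p (ξ t) ≤ C * Real.exp (-γ * (t - s) / δ) * p (ξ s))
    {g : ℝ → E} (hgS : ∀ t, 0 ≤ t → g t ∈ S) (hgM : ∀ t, 0 ≤ t → p (g t) ≤ M)
    {η : ℝ → E} (hη₀ : η 0 ∈ S) (hη : ∀ t, 0 ≤ t → HasDerivAt η (δ⁻¹ • A t (η t) - g t) t)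
    (t : ℝ) (ht : 0 ≤ t) :
    p (η t) ≤ C * Real.exp (-γ * t / δ) * p (η 0) + C * M * δ / γ := by
  let U := propagator fun t => δ⁻¹ • A t
  have hA' : Continuous fun t => δ⁻¹ • A t := by fun_prop
  have hdecay : ∀ s, 0 ≤ s → s ≤ t → ∀ x ∈ S,
      p (U t s x) ≤ C * Real.exp (-γ * (t - s) / δ) * p x := by
    intro s hs hst x hx
    have hUx : U s s x = x := by simp [U, propagator_self hA']
    simpa only [hUx] using hstab (fun r => U r s x)
      (fun r _ => hasDerivAt_propagator_left_apply hA' r s x) s hs (hUx.symm ▸ hx) t hst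
  have hforcing : ∀ s ∈ Set.Icc 0 t,
      p (U t s (-g s)) ≤ C * M * Real.exp (-γ * (t - s) / δ) := by
    intro s ⟨hs, hst⟩
    calc p (U t s (-g s)) = p (U t s (g s)) := by rw [map_neg, map_neg_eq_map]
      _ ≤ C * Real.exp (-γ * (t - s) / δ) * p (g s) := hdecay s hs hst _ (hgS s hs)
      _ ≤ C * Real.exp (-γ * (t - s) / δ) * M := by gcongr; exact hgM s hs
      _ = C * M * Real.exp (-γ * (t - s) / δ) := by ring
  have hM : 0 ≤ M := (apply_nonneg p _).trans (hgM 0 le_rfl)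
  calc p (η t)
      ≤ p (U t 0 (η 0)) + ∫ s in 0..t, C * M * Real.exp (-γ * (t - s) / δ) :=
        seminorm_le_add_integral_of_propagator_le hA' hp ht
          (fun s hs => by simpa [sub_eq_add_neg] using hη s hs.1) (by fun_prop) hforcing
    _ ≤ C * Real.exp (-γ * t / δ) * p (η 0) + C * M * (δ / γ) := by
        rw [intervalIntegral.integral_const_mul]
        gcongr
        · simpa using hdecay 0 le_rfl ht (η 0) hη₀
        · exact integral_exp_neg_mul_sub_div_le hδ hγ 0 t
    _ = C * Real.exp (-γ * t / δ) * p (η 0) + C * M * δ / γ := by rw [mul_div_assoc (C * M)]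

end VariationOfConstants

section ZeroSum

theorem sum_transpose_mulVec_eq_zero {m n R : Type*} [Fintype m] [Fintype n]
    [NonUnitalNonAssocSemiring R] {Q : Matrix m n R} (hQ : ∀ i, ∑ j, Q i j = 0) (x : m → R) :
    ∑ j, (Qᵀ *ᵥ x) j = 0 := by
  simp only [mulVec, dotProduct, transpose_apply]
  rw [Finset.sum_comm]
  simp only [← Finset.sum_mul, hQ, zero_mul, Finset.sum_const_zero]

theorem sum_eq_zero_of_hasDerivAt {ι : Type*} [Fintype ι] {η : ℝ → ι → ℝ} {v : ι → ℝ} {t : ℝ}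
    (hsum : ∀ s, ∑ i, η s i = 0) (hη : HasDerivAt η v t) : ∑ i, v i = 0 := by
  have hderiv : HasDerivAt (fun s => ∑ i, η s i) (∑ i, v i) t :=
    .fun_sum fun i _ => hasDerivAt_pi.1 hη i
  simp only [hsum] at hderiv
  exact hderiv.unique (hasDerivAt_const t 0)

theorem sum_forcing_eq_zero {ι : Type*} [Fintype ι] {Q : Matrix ι ι ℝ} (hQ : ∀ i, ∑ j, Q i j = 0)
    {η : ℝ → ι → ℝ} (hsum : ∀ s, ∑ i, η s i = 0) {c t : ℝ} {v : ι → ℝ}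
    (hη : HasDerivAt η (c • (Qᵀ *ᵥ η t) - v) t) : ∑ i, v i = 0 := by
  have h := sum_eq_zero_of_hasDerivAt hsum hη
  simpa only [Pi.sub_apply, Pi.smul_apply, Finset.sum_sub_distrib, ← Finset.smul_sum,
    sum_transpose_mulVec_eq_zero hQ, smul_zero, zero_sub, neg_eq_zero] using h

end ZeroSum

section TransposeMulVec

variable {ι : Type*} [Fintype ι] [DecidableEq ι]

/-- The action `x ↦ Qᵀ *ᵥ x` of a generator `Q` on laws, as a continuous linear map. -/
noncomputable def transposeMulVecCLM (Q : Matrix ι ι ℝ) : (ι → ℝ) →L[ℝ] (ι → ℝ) :=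
  LinearMap.toContinuousLinearMap (toLin' Qᵀ)

theorem continuous_transposeMulVecCLM : Continuous (transposeMulVecCLM (ι := ι)) :=
  (LinearMap.toContinuousLinearMap.toLinearMap ∘ₗ toLin'.toLinearMap ∘ₗ
    (transposeLinearEquiv ι ι ℝ ℝ).toLinearMap).continuous_of_finiteDimensional

end TransposeMulVec

/-- The ℓ¹ norm `l1norm` as a seminorm on `Fin N → ℝ`, whose own norm is the sup norm. -/
def l1Seminorm (N : ℕ) : Seminorm ℝ (Fin N → ℝ) :=
  .of l1norm
    (fun x y => (Finset.sum_le_sum fun i _ => abs_add_le (x i) (y i)).trans_eq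
      Finset.sum_add_distrib)
    (fun c x => by
      simp only [l1norm, Pi.smul_apply, smul_eq_mul, abs_mul, Finset.mul_sum, Real.norm_eq_abs])

theorem continuous_l1Seminorm {N : ℕ} : Continuous (l1Seminorm N) := by
  change Continuous fun x : Fin N → ℝ => ∑ i, |x i|
  fun_prop

theorem initial_layer_bound {N : ℕ} (hN : 1 ≤ N) (δ : ℝ) (hδ : 0 < δ)
    (Q : ℝ → Matrix (Fin N) (Fin N) ℝ) (hQcont : Continuous Q)
    (hQgen : ∀ t : ℝ, 0 ≤ t → IsGenerator (Q t))
    (C γ : ℝ) (hC : 1 ≤ C) (hγ : 0 < γ)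
    (hstab : ∀ ξ : ℝ → (Fin N → ℝ),
      (∀ t : ℝ, 0 ≤ t → HasDerivAt ξ (δ⁻¹ • ((Q t)ᵀ *ᵥ ξ t)) t) →
      ∀ s : ℝ, 0 ≤ s → (∑ i, ξ s i) = 0 →
        ∀ t : ℝ, s ≤ t →
          l1norm (ξ t) ≤ C * Real.exp (-γ * (t - s) / δ) * l1norm (ξ s))
    (M : ℝ) (hM : 0 ≤ M)
    (g : ℝ → (Fin N → ℝ)) (hgcont : Continuous g)
    (hgbound : ∀ t : ℝ, 0 ≤ t → l1norm (g t) ≤ M)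
    (η : ℝ → (Fin N → ℝ)) (hηsum : ∀ t : ℝ, (∑ i, η t i) = 0)
    (hη : ∀ t : ℝ, 0 ≤ t → HasDerivAt η (δ⁻¹ • ((Q t)ᵀ *ᵥ η t) - g t) t) :
    ∀ t : ℝ, 0 ≤ t →
      l1norm (η t) ≤ C * Real.exp (-γ * t / δ) * l1norm (η 0) + C * M * δ / γ :=
  initial_layer_bound_general continuous_l1Seminorm {x | ∑ i, x i = 0} hδ hγ
    (zero_le_one.trans hC) (continuous_transposeMulVecCLM.comp hQcont) hstab
    (fun t ht => sum_forcing_eq_zero (hQgen t ht).2 hηsum (hη t ht)) hgbound (hηsum 0) hη
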